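/- As p → ∞, the Taylor coefficients a_p of A satisfy a_p · u_c^p = (b/Γ(−1/3)) · p^{−4/3} + O(p^{−5/3}), where b = −(27/20)·(3/2)^{2/3} and Γ denotes the Gamma function. -/

import Mathlib

/-!
Statement 0: As `p → ∞`, the Taylor coefficients `a_p` of `A = Â ∘ û⁻¹` satisfy
`a_p · u_c^p = (b/Γ(−1/3)) · p^{−4/3} + O(p^{−5/3})`,
where `b = −(27/20)·(3/2)^{2/3}`.
-/

noncomputable def tc : ℝ := Real.sqrt 10 / (8 * (7 + Real.sqrt 7) ^ ((3:ℝ)/2))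

noncomputable def uc : ℝ := (6/5) * (7 + Real.sqrt 7) * tc

/-- The rational parametrization `û` of the `u`-variable. -/
noncomputable def uhat (H : ℂ) : ℂ :=
  ((uc : ℂ) / 3) * H * (10 - 12 * H + 6 * H ^ 2 - H ^ 3)

/-- The rational parametrization `Â` of the generating function `A`. -/
noncomputable def Ahat (H : ℂ) : ℂ :=
  (1/10) * ((((3:ℝ)/2) ^ ((7:ℝ)/3) : ℝ) : ℂ) * (9 - 8 * H + 3 * H ^ 2) / (3 - 3 * H + H ^ 2) ^ 2

noncomputable def bconst : ℝ := -(27/20) * ((3:ℝ)/2) ^ ((2:ℝ)/3)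

open Complex Metric Filter Topology Asymptotics

/-- The normalized variable `û / u_c` in the local coordinate `h = 1 - H`. -/
noncomputable def localU (h : ℂ) : ℂ := 1 - h ^ 3 * (2 + h) / 3

/-- The derivative of `localU`. -/
noncomputable def localU' (h : ℂ) : ℂ := -(2 * h ^ 2 + 4 * h ^ 3 / 3)

/-- The multiplicative constant of `Ahat`. -/
noncomputable def ampl : ℝ := (1 / 10) * ((3 : ℝ) / 2) ^ ((7 : ℝ) / 3)

/-- `Ahat` in the local coordinate `h = 1 - H`. -/
noncomputable def localA (h : ℂ) : ℂ := ampl * ((4 + 2 * h + 3 * h ^ 2) / (1 + h + h ^ 2) ^ 2)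

/-- The derivative of `localA`. -/
noncomputable def localA' (h : ℂ) : ℂ :=
  ampl * (-6 * (1 + 2 * h + h ^ 2 + h ^ 3) / (1 + h + h ^ 2) ^ 3)

/-- A disk on which `localA` is holomorphic and the only zero of `localU` is `1`. -/
def disk : Set ℂ := ball 4 (17 / 4)

lemma uhat_one_sub (h : ℂ) : uhat (1 - h) = uc * localU h := by
  unfold uhat localU; ring

lemma Ahat_one_sub (h : ℂ) : Ahat (1 - h) = localA h := by
  unfold Ahat localA ampl
  rw [show 9 - 8 * (1 - h) + 3 * (1 - h) ^ 2 = 4 + 2 * h + 3 * h ^ 2 by ring,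
    show 3 - 3 * (1 - h) + (1 - h) ^ 2 = 1 + h + h ^ 2 by ring]
  push_cast
  ring

lemma mem_disk_iff {h : ℂ} : h ∈ disk ↔ (h.re - 4) ^ 2 + h.im ^ 2 < (17 / 4) ^ 2 := by
  rw [disk, mem_ball, dist_eq, ← sq_lt_sq₀ (norm_nonneg _) (by norm_num), Complex.sq_norm,
    normSq_apply]
  simp [sq]

lemma re_gt_of_mem_disk {h : ℂ} (hh : h ∈ disk) : -1 / 4 < h.re := by
  rw [mem_disk_iff] at hh
  nlinarith [sq_nonneg h.im]

lemma quadratic_ne_zero {h : ℂ} (hh : h ∈ disk) : 1 + h + h ^ 2 ≠ 0 := by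
  have hre := re_gt_of_mem_disk hh
  intro h0
  have h1 := congrArg Complex.re h0
  have h2 := congrArg Complex.im h0
  simp [sq] at h1 h2
  have h3 : h.im = 0 := by
    have : h.im * (1 + 2 * h.re) = 0 := by linarith
    rcases mul_eq_zero.mp this with h | h
    · exact h
    · linarith
  rw [h3] at h1
  nlinarith [sq_nonneg (h.re + 1 / 2)]

lemma cubic_ne_zero {h : ℂ} (hh : h ∈ disk) : h ^ 3 + 3 * h ^ 2 + 3 * h + 3 ≠ 0 := by
  have hre := re_gt_of_mem_disk hh
  intro h0
  have h1 := congrArg Complex.re h0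
  have h2 := congrArg Complex.im h0
  simp [pow_succ] at h1 h2
  obtain ⟨x, y⟩ := h
  simp only at h1 h2 hre
  have h3 : y * (3 * (x + 1) ^ 2 - y ^ 2) = 0 := by linarith
  rcases mul_eq_zero.mp h3 with h | h
  · subst h
    nlinarith [pow_pos (show 0 < x + 1 by linarith) 3]
  · have h4 : (x + 1) ^ 3 - 3 * (x + 1) * y ^ 2 + 2 = 0 := by linarith
    have h5 : y ^ 2 = 3 * (x + 1) ^ 2 := by linarith
    rw [h5] at h4
    have h6 : (3 / 4 : ℝ) ^ 3 < (x + 1) ^ 3 := by gcongr; linarith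
    nlinarith

lemma localU_eq_mul (h : ℂ) : localU h = (1 - h) * ((h ^ 3 + 3 * h ^ 2 + 3 * h + 3) / 3) := by
  unfold localU; ring

lemma localU_ne_zero {h : ℂ} (hh : h ∈ disk) (h1 : h ≠ 1) : localU h ≠ 0 := by
  rw [localU_eq_mul]
  exact mul_ne_zero (sub_ne_zero.mpr h1.symm) (div_ne_zero (cubic_ne_zero hh) (by norm_num))

lemma hasDerivAt_localU (h : ℂ) : HasDerivAt localU (localU' h) h := by
  have := ((((hasDerivAt_id h).pow 3).mul ((hasDerivAt_id h).const_add 2)).div_const 3).const_sub 1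
  refine (this.congr_deriv ?_).congr_of_eventuallyEq (.of_forall fun x => ?_)
  · simp [localU']; ring
  · simp [localU]

lemma hasDerivAt_localA {h : ℂ} (hh : h ∈ disk) : HasDerivAt localA (localA' h) h := by
  have hq := quadratic_ne_zero hh
  have hid := hasDerivAt_id h
  have hn := ((hid.const_mul 2).const_add 4).add ((hid.pow 2).const_mul 3)
  have hd := ((hid.const_add 1).add (hid.pow 2)).pow 2
  have := (hn.div hd (by simpa using hq)).const_mul (ampl : ℂ)
  refine (this.congr_deriv ?_).congr_of_eventuallyEq (.of_forall fun x => ?_)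
  · simp [localA']
    left
    field_simp
    ring
  · simp [localA]

lemma continuousOn_localA' : ContinuousOn localA' disk := by
  unfold localA'
  refine continuousOn_const.mul (ContinuousOn.div (by fun_prop) (by fun_prop) fun h hh => ?_)
  exact pow_ne_zero _ (quadratic_ne_zero hh)

lemma continuous_localU : Continuous localU := by
  unfold localU; fun_prop

section Exact

variable {U : Set ℂ} {f g : ℂ → ℂ}

lemma Complex.IsExactOn.add (hf : IsExactOn f U) (hg : IsExactOn g U) :
    IsExactOn (fun z => f z + g z) U := by
  obtain ⟨F, hF⟩ := hf
  obtain ⟨G, hG⟩ := hg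
  exact ⟨fun z => F z + G z, fun z hz => (hF z hz).add (hG z hz)⟩

lemma Complex.IsExactOn.const_mul (c : ℂ) (hf : IsExactOn f U) :
    IsExactOn (fun z => c * f z) U := by
  obtain ⟨F, hF⟩ := hf
  exact ⟨fun z => c * F z, fun z hz => (hF z hz).const_mul c⟩

lemma Complex.IsExactOn.sum {ι : Type*} {s : Finset ι} {f : ι → ℂ → ℂ}
    (hf : ∀ i ∈ s, IsExactOn (f i) U) : IsExactOn (fun z => ∑ i ∈ s, f i z) U := by
  choose! F hF using hf
  exact ⟨fun z => ∑ i ∈ s, F i z, fun z hz => HasDerivAt.fun_sum fun i hi => hF i hi z hz⟩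

lemma Complex.IsExactOn.congr (hf : IsExactOn f U) (h : ∀ z ∈ U, f z = g z) : IsExactOn g U := by
  obtain ⟨F, hF⟩ := hf
  exact ⟨F, fun z hz => h z hz ▸ hF z hz⟩

lemma Complex.IsExactOn.mono {W : Set ℂ} (hf : IsExactOn f U) (h : W ⊆ U) : IsExactOn f W := by
  obtain ⟨F, hF⟩ := hf
  exact ⟨F, fun z hz => hF z (h hz)⟩

end Exact

lemma isExactOn_localU'_div_pow (m : ℕ) :
    IsExactOn (fun h => localU' h / localU h ^ (m + 2)) (disk \ {1}) := by
  refine ⟨fun h => -(1 / (m + 1 : ℂ)) * (localU h ^ (m + 1))⁻¹, fun h hh => ?_⟩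
  have hU := localU_ne_zero hh.1 hh.2
  have hm : (m + 1 : ℂ) ≠ 0 := by exact_mod_cast m.succ_ne_zero
  refine ((((hasDerivAt_localU h).pow (m + 1)).fun_inv (pow_ne_zero _ hU)).const_mul
    _).congr_deriv ?_
  simp
  field_simp
  ring

lemma isExactOn_logDeriv_localU_sub :
    IsExactOn (fun h => localU' h / localU h - 1 / (h - 1)) (disk \ {1}) := by
  have : DifferentiableOn ℂ
      (fun h : ℂ => (3 * h ^ 2 + 6 * h + 3) / (h ^ 3 + 3 * h ^ 2 + 3 * h + 3)) disk :=
    DifferentiableOn.fun_div (by fun_prop) (by fun_prop) fun h hh => cubic_ne_zero hh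
  refine (this.isExactOn_ball.mono (U := disk) Set.sdiff_subset).congr fun h hh => ?_
  have h1 : h - 1 ≠ 0 := sub_ne_zero.mpr hh.2
  have h2 : 1 - h ≠ 0 := sub_ne_zero.mpr (Ne.symm hh.2)
  have h3 := cubic_ne_zero hh.1
  rw [localU_eq_mul, localU', ← neg_sub h 1]
  rw [eq_sub_iff_add_eq, div_add_div _ _ h3 h1, div_eq_div_iff (mul_ne_zero h3 h1)
    (mul_ne_zero (neg_ne_zero.mpr h1) (div_ne_zero h3 (by norm_num)))]
  ring

lemma isBoundedUnder_remainder {ρ : ℝ} (hρ : 0 < ρ) {α : ℕ → ℂ}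
    (hα : ∀ h : ℂ, ‖1 - h‖ < ρ → HasSum (fun k => α k * localU h ^ k) (localA h)) (p : ℕ) :
    IsBoundedUnder (· ≤ ·) (𝓝[≠] (1 : ℂ)) (fun h =>
      ‖(localA h - ∑ k ∈ Finset.range (p + 1), α k * localU h ^ k) / localU h ^ (p + 1)‖) := by
  have hdisk : disk \ {1} ∈ 𝓝[≠] (1 : ℂ) :=
    sdiff_mem_nhdsWithin_compl (isOpen_ball.mem_nhds (by rw [← disk, mem_disk_iff]; norm_num)) _
  have hball : ∀ᶠ h in 𝓝[≠] (1 : ℂ), ‖1 - h‖ < ρ := by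
    refine mem_nhdsWithin_of_mem_nhds ?_
    filter_upwards [ball_mem_nhds (1 : ℂ) hρ] with h hh
    rwa [mem_ball, dist_comm, dist_eq] at hh
  obtain ⟨w, hw, hwρ⟩ := (Filter.Eventually.and hdisk hball).exists
  have hw0 := localU_ne_zero hw.1 hw.2
  obtain ⟨M, hM⟩ := (hα w hwρ).summable.tendsto_atTop_zero.norm.bddAbove_range
  have hM' (k : ℕ) : ‖α k‖ ≤ M / ‖localU w‖ ^ k := by
    rw [le_div_iff₀ (pow_pos (norm_pos_iff.mpr hw0) _), ← norm_pow, ← norm_mul]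
    exact hM ⟨k, rfl⟩
  have hM0 : 0 ≤ M := (norm_nonneg _).trans (hM ⟨0, rfl⟩)
  have hsmall : ∀ᶠ h in 𝓝[≠] (1 : ℂ), ‖localU h‖ < ‖localU w‖ / 2 := by
    refine mem_nhdsWithin_of_mem_nhds ?_
    refine continuous_localU.norm.continuousAt.eventually_lt continuousAt_const ?_
    have : localU 1 = 0 := by rw [localU_eq_mul]; simp
    simpa [this] using hw0
  refine ⟨M / ‖localU w‖ ^ (p + 1) * 2, eventually_map.mpr ?_⟩
  filter_upwards [hdisk, hball, hsmall] with h hh hhρ hhs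
  have hU := localU_ne_zero hh.1 hh.2
  have hsum := ((hasSum_nat_add_iff' (p + 1)).mpr (hα h hhρ)).div_const (localU h ^ (p + 1))
  have hgeom := (hasSum_geometric_two).mul_left (M / ‖localU w‖ ^ (p + 1))
  refine hsum.norm_le_of_bounded hgeom fun k => ?_
  have hw0' : 0 < ‖localU w‖ := norm_pos_iff.mpr hw0
  calc ‖α (k + (p + 1)) * localU h ^ (k + (p + 1)) / localU h ^ (p + 1)‖
      = ‖α (k + (p + 1))‖ * ‖localU h‖ ^ k := by
        rw [pow_add, ← mul_assoc, mul_div_cancel_right₀ _ (pow_ne_zero _ hU), norm_mul, norm_pow]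
    _ ≤ M / ‖localU w‖ ^ (k + (p + 1)) * (‖localU w‖ / 2) ^ k := by
        gcongr
        exact hM' _
    _ = M / ‖localU w‖ ^ (p + 1) * (1 / 2) ^ k := by
        rw [div_pow, pow_add, div_pow, one_pow]
        field_simp

lemma isExactOn_sub_residue {ρ : ℝ} (hρ : 0 < ρ) {α : ℕ → ℂ}
    (hα : ∀ h : ℂ, ‖1 - h‖ < ρ → HasSum (fun k => α k * localU h ^ k) (localA h)) (p : ℕ) :
    IsExactOn (fun h => localA' h / localU h ^ p - p * α p / (h - 1)) (disk \ {1}) := by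
  set R : ℂ → ℂ := fun h =>
    (localA h - ∑ k ∈ Finset.range (p + 1), α k * localU h ^ k) / localU h ^ (p + 1) with hR
  have hRdiff : DifferentiableOn ℂ R (disk \ {1}) := by
    refine DifferentiableOn.fun_div (DifferentiableOn.fun_sub ?_ (DifferentiableOn.fun_sum ?_)) ?_ ?_
    · exact fun h hh => (hasDerivAt_localA hh.1).differentiableAt.differentiableWithinAt
    · exact fun k _ h _ => (((hasDerivAt_localU h).differentiableAt.pow k).const_mul
        _).differentiableWithinAt
    · exact fun h _ => ((hasDerivAt_localU h).differentiableAt.pow _).differentiableWithinAt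
    · exact fun h hh => pow_ne_zero _ (localU_ne_zero hh.1 hh.2)
  have hnhds : disk ∈ 𝓝 (1 : ℂ) :=
    isOpen_ball.mem_nhds (by rw [← disk, mem_disk_iff]; norm_num)
  have hbdd : IsBoundedUnder (· ≤ ·) (𝓝[≠] (1 : ℂ)) (fun h => ‖R h - R 1‖) := by
    obtain ⟨C, hC⟩ := isBoundedUnder_remainder hρ hα p
    refine ⟨C + ‖R 1‖, eventually_map.mpr ?_⟩
    filter_upwards [eventually_map.mp hC] with h hh
    exact norm_sub_le_of_le hh le_rfl
  have hext := differentiableOn_update_limUnder_of_isLittleO hnhds hRdiff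
    hbdd.isLittleO_sub_self_inv
  have hRU : IsExactOn (fun h => R h * localU' h) (disk \ {1}) := by
    have hU' : DifferentiableOn ℂ localU' disk := by unfold localU'; fun_prop
    refine ((hext.fun_mul hU').isExactOn_ball.mono (U := disk) Set.sdiff_subset).congr
      fun h hh => ?_
    rw [Function.update_of_ne hh.2]
  have hprod : IsExactOn (fun h => localA' h / localU h ^ p
      - p * (localA h * localU' h / localU h ^ (p + 1))) (disk \ {1}) := by
    refine ⟨fun h => localA h / localU h ^ p, fun h hh => ?_⟩
    have hU := localU_ne_zero hh.1 hh.2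
    refine ((hasDerivAt_localA hh.1).fun_div ((hasDerivAt_localU h).fun_pow p)
      (pow_ne_zero _ hU)).congr_deriv ?_
    rcases p with _ | p
    · simp
    · simp
      field_simp
      ring
  have hsum : IsExactOn (fun h => ∑ k ∈ Finset.range p,
      α k * (localU' h / localU h ^ (p - 1 - k + 2))) (disk \ {1}) :=
    IsExactOn.sum fun k _ => (isExactOn_localU'_div_pow _).const_mul _
  refine (hprod.add (((hsum.add hRU).add
    (isExactOn_logDeriv_localU_sub.const_mul (α p))).const_mul (p : ℂ))).congr fun h hh => ?_
  have hU := localU_ne_zero hh.1 hh.2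
  have hsum_eq : ∑ k ∈ Finset.range p, α k * (localU' h / localU h ^ (p - 1 - k + 2))
      = (∑ k ∈ Finset.range p, α k * localU h ^ k) * localU' h / localU h ^ (p + 1) := by
    rw [Finset.sum_mul, Finset.sum_div]
    refine Finset.sum_congr rfl fun k hk => ?_
    have hk' := Finset.mem_range.mp hk
    have : p + 1 = k + (p - 1 - k + 2) := by omega
    rw [this, pow_add _ k]
    field_simp
  rw [hsum_eq, hR]
  simp only [Finset.sum_range_succ]
  generalize ∑ k ∈ Finset.range p, α k * localU h ^ k = S
  have h1 : h - 1 ≠ 0 := sub_ne_zero.mpr hh.2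
  field_simp
  ring

lemma integral_segment_eq_sub {f F : ℂ → ℂ} {c e : ℂ} {a b : ℝ}
    (hF : ∀ r ∈ Set.uIcc a b, HasDerivAt F (f (c + r * e)) (c + r * e))
    (hf : ContinuousOn (fun r : ℝ => f (c + r * e)) (Set.uIcc a b)) :
    ∫ r in a..b, f (c + r * e) * e = F (c + b * e) - F (c + a * e) := by
  refine intervalIntegral.integral_eq_sub_of_hasDerivAt (f := fun r : ℝ => F (c + r * e))
    (fun r hr => ?_) (hf.mul continuousOn_const).intervalIntegrable
  have : HasDerivAt (fun r : ℝ => c + r * e) e r := by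
    simpa using ((hasDerivAt_id r).ofReal_comp.mul_const e).const_add c
  exact (hF r hr).comp r this

/-- The primitive sixth root of unity in the upper half plane. -/
noncomputable def ζ : ℂ := ⟨1 / 2, √3 / 2⟩

lemma ray_mem_disk {e : ℂ} (he : e.re = 1 / 2) (hn : e.im ^ 2 = 3 / 4) {r : ℝ}
    (hr : r ∈ Set.Icc (0 : ℝ) 4) : (r * e : ℂ) ∈ disk \ {1} := by
  obtain ⟨hr0, hr4⟩ := hr
  refine ⟨?_, fun h => ?_⟩
  · rw [mem_disk_iff]
    simp only [mul_re, ofReal_re, ofReal_im, mul_im, zero_mul, sub_zero, add_zero, mul_pow, hn, he]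
    nlinarith
  · have h1 := congrArg Complex.re h
    have h2 := congrArg Complex.im h
    simp [he] at h1 h2
    rcases h2 with h2 | h2
    · simp [h2] at h1
    · norm_num [h2] at hn

lemma vertical_mem_disk {t : ℝ} (ht : t ∈ Set.Icc (-(2 * √3)) (2 * √3)) :
    (2 + t * I : ℂ) ∈ disk \ {1} := by
  have h3 : √3 ^ 2 = 3 := Real.sq_sqrt (by norm_num)
  refine ⟨?_, fun h => ?_⟩
  · rw [mem_disk_iff]
    simp
    nlinarith [ht.1, ht.2]
  · simpa using congrArg Complex.re h

/-- The residue theorem for a simple residue at `1` and the triangle with vertices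
`0`, `4 ζ`, `4 conj ζ`. -/
lemma triangle_integral {f : ℂ → ℂ} {κ : ℂ} (hf : ContinuousOn f (disk \ {1}))
    (hex : IsExactOn (fun h => f h - κ / (h - 1)) (disk \ {1})) :
    (∫ t in -(2 * √3)..(2 * √3), f (2 + t * I) * I)
      - ((∫ r in (0 : ℝ)..4, f (r * ζ) * ζ)
        - ∫ r in (0 : ℝ)..4, f (r * (starRingEnd ℂ) ζ) * (starRingEnd ℂ) ζ)
      = 2 * Real.pi * I * κ := by
  obtain ⟨Ψ, hΨ⟩ := hex
  have h3 : √3 ^ 2 = 3 := Real.sq_sqrt (by norm_num)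
  have h3pos : 0 < √3 := by positivity
  have hray (e : ℂ) (he : e.re = 1 / 2) (hn : e.im ^ 2 = 3 / 4) :
      ∫ r in (0 : ℝ)..4, f (r * e) * e
        = Ψ (4 * e) + κ * log (1 - 4 * e) - Ψ 0 := by
    have hIcc : Set.uIcc (0 : ℝ) 4 = Set.Icc 0 4 := Set.uIcc_of_le (by norm_num)
    have := integral_segment_eq_sub (f := f) (F := fun h => Ψ h + κ * log (1 - h)) (c := 0)
      (e := e) (a := 0) (b := 4) ?_ ?_
    · simpa using this
    · intro r hr
      rw [hIcc] at hr
      have hmem := ray_mem_disk he hn hr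
      rw [zero_add]
      have hslit : 1 - (r * e : ℂ) ∈ slitPlane := by
        rw [mem_slitPlane_iff]
        rcases hr.1.eq_or_lt with h | h
        · simp [← h]
        · right
          have : e.im ≠ 0 := by rintro h; norm_num [h] at hn
          simp [h.ne', this]
      have hl := (((hasDerivAt_id (r * e : ℂ)).const_sub 1).clog hslit).const_mul κ
      refine ((hΨ _ hmem).add hl).congr_deriv ?_
      have h1 : (r * e : ℂ) - 1 ≠ 0 := sub_ne_zero.mpr hmem.2
      simp only [id]
      rw [← neg_sub (r * e : ℂ) 1]
      field_simp
      ring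
    · simp only [zero_add]
      refine hf.comp (by fun_prop) fun r hr => ray_mem_disk he hn (hIcc ▸ hr)
  have hvert : ∫ t in -(2 * √3)..(2 * √3), f (2 + t * I) * I
      = Ψ (4 * ζ) + κ * log (4 * ζ - 1)
        - (Ψ (4 * (starRingEnd ℂ) ζ) + κ * log (4 * (starRingEnd ℂ) ζ - 1)) := by
    have hIcc : Set.uIcc (-(2 * √3)) (2 * √3) = Set.Icc (-(2 * √3)) (2 * √3) :=
      Set.uIcc_of_le (by linarith)
    have hζ : (4 * ζ : ℂ) = 2 + (2 * √3 : ℝ) * I := by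
      apply Complex.ext <;> simp [ζ] <;> ring
    have hζ' : (4 * (starRingEnd ℂ) ζ : ℂ) = 2 + (-(2 * √3) : ℝ) * I := by
      apply Complex.ext <;> simp [ζ] <;> ring
    rw [hζ, hζ']
    refine integral_segment_eq_sub (F := fun h => Ψ h + κ * log (h - 1)) (fun t ht => ?_) ?_
    · rw [hIcc] at ht
      have hslit : (2 + t * I : ℂ) - 1 ∈ slitPlane := by
        rw [mem_slitPlane_iff]; left; norm_num
      have hl := (((hasDerivAt_id (2 + t * I : ℂ)).sub_const 1).clog hslit).const_mul κ
      refine ((hΨ _ (vertical_mem_disk ht)).add hl).congr_deriv ?_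
      simp only [id]
      ring
    · exact hf.comp (by fun_prop) fun t ht => vertical_mem_disk (hIcc ▸ ht)
  have hlog : log (4 * ζ - 1) = log (1 - 4 * ζ) + Real.pi * I := by
    rw [← neg_sub (4 * ζ) 1, log, log, norm_neg,
      arg_neg_eq_arg_sub_pi_of_im_pos (by simp [ζ])]
    push_cast; ring
  have hlog' : log (4 * (starRingEnd ℂ) ζ - 1)
      = log (1 - 4 * (starRingEnd ℂ) ζ) - Real.pi * I := by
    rw [← neg_sub (4 * (starRingEnd ℂ) ζ) 1, log, log, norm_neg,
      arg_neg_eq_arg_add_pi_of_im_neg (by simp [ζ])]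
    push_cast; ring
  rw [hvert, hray ζ rfl (by simp [ζ, div_pow, h3]; norm_num),
    hray ((starRingEnd ℂ) ζ) (by simp [ζ]) (by simp [ζ, div_pow, h3]; norm_num), hlog, hlog']
  ring

lemma norm_pow_sub_pow_le {x y : ℂ} {M : ℝ} (hx : ‖x‖ ≤ M) (hy : ‖y‖ ≤ M) (n : ℕ) :
    ‖x ^ (n + 1) - y ^ (n + 1)‖ ≤ (n + 1) * ‖x - y‖ * M ^ n := by
  have hM : 0 ≤ M := (norm_nonneg x).trans hx
  induction n with
  | zero => simp
  | succ n ih =>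
    calc ‖x ^ (n + 1 + 1) - y ^ (n + 1 + 1)‖
        = ‖x * (x ^ (n + 1) - y ^ (n + 1)) + (x - y) * y ^ (n + 1)‖ := by ring_nf
      _ ≤ ‖x‖ * ‖x ^ (n + 1) - y ^ (n + 1)‖ + ‖x - y‖ * ‖y‖ ^ (n + 1) := by
        refine (norm_add_le _ _).trans ?_
        rw [norm_mul, norm_mul, norm_pow]
      _ ≤ M * ((n + 1) * ‖x - y‖ * M ^ n) + ‖x - y‖ * M ^ (n + 1) := by gcongr
      _ = ((n + 1 : ℕ) + 1) * ‖x - y‖ * M ^ (n + 1) := by push_cast; ring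

section Ray

variable {e : ℂ} {r : ℝ}

lemma localU_ray (he : e.re = 1 / 2) (hn : e.im ^ 2 = 3 / 4) :
    localU (r * e) = (1 + 2 / 3 * r ^ 3 : ℝ) + (r ^ 4 / 3 : ℝ) * e := by
  have h3 : e ^ 3 = -1 := by
    apply Complex.ext
    · simp [pow_succ, he]
      nlinarith
    · simp [pow_succ, he]
      linear_combination (-e.im) * hn
  unfold localU
  push_cast
  linear_combination (-(r : ℂ) ^ 3 * (2 + r * e) / 3) * h3

lemma norm_localU_ray_ge (he : e.re = 1 / 2) (hn : e.im ^ 2 = 3 / 4) :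
    1 + 2 / 3 * r ^ 3 ≤ ‖localU (r * e)‖ := by
  refine le_trans ?_ (re_le_norm _)
  rw [localU_ray he hn]
  simp [he, -ofReal_add, -ofReal_mul, -ofReal_div, -ofReal_pow]
  positivity

lemma norm_inv_localU_ray_le (he : e.re = 1 / 2) (hn : e.im ^ 2 = 3 / 4) (hr : 0 ≤ r) :
    ‖(localU (r * e))⁻¹‖ ≤ (1 + 2 / 3 * r ^ 3)⁻¹ := by
  rw [norm_inv]
  have : 0 < 1 + 2 / 3 * r ^ 3 := by positivity
  gcongr
  exact norm_localU_ray_ge he hn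

lemma norm_inv_localU_ray_sub_exp_le (he : e.re = 1 / 2) (hn : e.im ^ 2 = 3 / 4)
    (hr : r ∈ Set.Icc (0 : ℝ) 4) :
    ‖(localU (r * e))⁻¹ - (Real.exp (-(2 / 3 * r ^ 3)) : ℝ)‖ ≤ 8 * r ^ 4 := by
  obtain ⟨hr0, hr4⟩ := hr
  set w : ℝ := 1 + 2 / 3 * r ^ 3 with hw
  have hw1 : 1 ≤ w := by rw [hw]; linarith [pow_nonneg hr0 3]
  have hwU : w ≤ ‖localU (r * e)‖ := norm_localU_ray_ge he hn
  have hU : localU (r * e) ≠ 0 := norm_pos_iff.mp (by linarith)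
  have hw0 : (w : ℂ) ≠ 0 := by exact_mod_cast (by linarith : w ≠ 0)
  have hne : ‖e‖ = 1 := by
    rw [← sq_eq_sq₀ (norm_nonneg _) zero_le_one, Complex.sq_norm, normSq_apply, he]
    linarith
  have h1 : ‖(localU (r * e))⁻¹ - (w : ℂ)⁻¹‖ ≤ r ^ 4 / 3 := by
    rw [inv_sub_inv hU hw0, norm_div, norm_mul, localU_ray he hn, ← hw, sub_add_cancel_left,
      norm_neg, norm_mul, hne, mul_one, norm_real, norm_real, Real.norm_of_nonneg (by positivity),
      Real.norm_of_nonneg (by linarith)]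
    rw [localU_ray he hn, ← hw] at hwU
    refine div_le_self (by positivity) ?_
    nlinarith
  have h2 : ‖(w : ℂ)⁻¹ - (Real.exp (-(2 / 3 * r ^ 3)) : ℝ)‖ ≤ (2 / 3 * r ^ 3) ^ 2 := by
    rw [← ofReal_inv, ← ofReal_sub, norm_real, Real.norm_eq_abs]
    have hz : 0 ≤ 2 / 3 * r ^ 3 := by positivity
    have hwz : w = 1 + 2 / 3 * r ^ 3 := hw
    generalize 2 / 3 * r ^ 3 = z at hz hwz
    have hle : Real.exp (-z) ≤ w⁻¹ := by
      rw [Real.exp_neg]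
      gcongr
      rw [hwz]; linarith [Real.add_one_le_exp z]
    rw [abs_of_nonneg (sub_nonneg.mpr hle)]
    have hge : 1 - z ≤ Real.exp (-z) := by linarith [Real.add_one_le_exp (-z)]
    have : w⁻¹ ≤ 1 - z + z ^ 2 := by
      rw [inv_le_iff_one_le_mul₀ (by linarith), hwz]
      nlinarith [pow_nonneg hz 3]
    linarith
  have h3 : (2 / 3 * r ^ 3) ^ 2 ≤ 64 / 9 * r ^ 4 := by
    have : r ^ 2 ≤ 4 ^ 2 := by gcongr
    nlinarith [pow_nonneg hr0 4]
  have := norm_sub_le_norm_sub_add_norm_sub (localU (r * e))⁻¹ (w : ℂ)⁻¹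
    (Real.exp (-(2 / 3 * r ^ 3)) : ℝ)
  linarith [pow_nonneg hr0 4]

lemma inv_one_add_le_exp (hr : r ∈ Set.Icc (0 : ℝ) 4) :
    (1 + 2 / 3 * r ^ 3)⁻¹ ≤ Real.exp (-(1 / 100) * r ^ 3) := by
  obtain ⟨hr0, hr4⟩ := hr
  have hc : r ^ 3 ≤ 4 ^ 3 := by gcongr
  have h0 : 0 ≤ r ^ 3 := by positivity
  generalize r ^ 3 = s at hc h0
  have h1 := Real.add_one_le_exp (-(1 / 100) * s)
  refine le_trans ?_ h1
  rw [inv_le_iff_one_le_mul₀ (by positivity)]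
  nlinarith

end Ray

section RayIntegral

variable {e : ℂ}

lemma exists_norm_localA'_ray_add_le (he : e.re = 1 / 2) (hn : e.im ^ 2 = 3 / 4) :
    ∃ K : ℝ, 0 ≤ K ∧ ∀ r ∈ Set.Icc (0 : ℝ) 4, ‖localA' (r * e) + 6 * ampl‖ ≤ K * r := by
  set k : ℂ → ℂ := fun h =>
    6 * ampl * (1 + 5 * h + 6 * h ^ 2 + 6 * h ^ 3 + 3 * h ^ 4 + h ^ 5) / (1 + h + h ^ 2) ^ 3 with hk
  have hcont : ContinuousOn (fun r : ℝ => k (r * e) * e) (Set.Icc 0 4) := by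
    refine ContinuousOn.mul (ContinuousOn.div (by fun_prop) (by fun_prop) fun r hr => ?_)
      continuousOn_const
    exact pow_ne_zero _ (quadratic_ne_zero (ray_mem_disk he hn hr).1)
  obtain ⟨K, hK⟩ := isCompact_Icc.exists_bound_of_continuousOn hcont
  refine ⟨K, (norm_nonneg _).trans (hK 0 (by norm_num)), fun r hr => ?_⟩
  have hq := quadratic_ne_zero (ray_mem_disk he hn hr).1
  have : localA' (r * e) + 6 * ampl = k (r * e) * e * r := by
    rw [mul_assoc, mul_comm e]
    simp only [hk, localA']
    generalize (r * e : ℂ) = h at hq ⊢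
    field_simp
    ring
  rw [this, norm_mul, norm_real, Real.norm_of_nonneg hr.1]
  exact mul_le_mul_of_nonneg_right (hK r hr) hr.1

lemma ampl_pos : 0 < ampl := by unfold ampl; positivity

/-- Pointwise comparison of the integrand on a ray with its leading exponential behaviour. -/
lemma exists_ray_integrand_bound (he : e.re = 1 / 2) (hn : e.im ^ 2 = 3 / 4) :
    ∃ C : ℝ, 0 ≤ C ∧ ∀ p : ℕ, 1 ≤ p → ∀ r : ℝ, 0 < r →
      ‖(Set.Ioc (0 : ℝ) 4).indicator (fun r : ℝ => localA' (r * e) / localU (r * e) ^ p) r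
        + 6 * ampl * (Real.exp (-(2 / 3 * p) * r ^ 3) : ℝ)‖
      ≤ C * (r * Real.exp (-(p / 100) * r ^ 3) + p * (r ^ 4 * Real.exp (-(p / 100) * r ^ 3))) := by
  obtain ⟨K, hK0, hK⟩ := exists_norm_localA'_ray_add_le he hn
  have ha := ampl_pos
  refine ⟨K + 100 * ampl, by positivity, fun p hp r hr => ?_⟩
  set E := Real.exp (-(p / 100) * r ^ 3) with hE
  have hE0 : 0 < E := Real.exp_pos _
  by_cases hr4 : r ≤ 4
  · have hr' : r ∈ Set.Icc (0 : ℝ) 4 := ⟨hr.le, hr4⟩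
    rw [Set.indicator_of_mem (show r ∈ Set.Ioc (0 : ℝ) 4 from ⟨hr, hr4⟩)]
    set x := (localU (r * e))⁻¹ with hx
    set y : ℂ := ((Real.exp (-(2 / 3 * r ^ 3)) : ℝ) : ℂ) with hy
    set M := (1 + 2 / 3 * r ^ 3)⁻¹ with hM
    have hM0 : 0 < M := by positivity
    have hxM : ‖x‖ ≤ M := norm_inv_localU_ray_le he hn hr.le
    have hyM : ‖y‖ ≤ M := by
      rw [hy, norm_real, Real.norm_of_nonneg (Real.exp_pos _).le, Real.exp_neg]
      refine inv_anti₀ (by positivity) ?_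
      linarith [Real.add_one_le_exp (2 / 3 * r ^ 3)]
    have hME : M ≤ Real.exp (-(1 / 100) * r ^ 3) := inv_one_add_le_exp hr'
    have hMp : M ^ p ≤ E := by
      calc M ^ p ≤ Real.exp (-(1 / 100) * r ^ 3) ^ p := by gcongr
        _ = E := by rw [← Real.exp_nat_mul, hE]; ring_nf
    have hr3 : r ^ 3 ≤ 4 ^ 3 := by gcongr
    obtain ⟨q, rfl⟩ : ∃ q, p = q + 1 := ⟨p - 1, by omega⟩
    have hMq : M ^ q ≤ 2 * E := by
      calc M ^ q ≤ Real.exp (-(1 / 100) * r ^ 3) ^ q := by gcongr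
        _ = Real.exp (r ^ 3 / 100) * E := by
          rw [← Real.exp_nat_mul, hE, ← Real.exp_add]; push_cast; ring_nf
        _ ≤ 2 * E := by
          gcongr
          rw [← Real.le_log_iff_exp_le (by norm_num)]
          linarith [Real.log_two_gt_d9]
    have hyp : ((Real.exp (-(2 / 3 * (q + 1 : ℕ)) * r ^ 3) : ℝ) : ℂ) = y ^ (q + 1) := by
      rw [hy, ← ofReal_pow, ← Real.exp_nat_mul]; ring_nf
    rw [hyp, div_eq_mul_inv, ← inv_pow, ← hx]
    have hxy : ‖x ^ (q + 1) - y ^ (q + 1)‖ ≤ (q + 1 : ℕ) * (8 * r ^ 4) * (2 * E) := by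
      refine (norm_pow_sub_pow_le hxM hyM q).trans ?_
      push_cast
      gcongr
      exact norm_inv_localU_ray_sub_exp_le he hn hr'
    have hxp : ‖x ^ (q + 1)‖ ≤ E := by
      rw [norm_pow]
      exact (by gcongr : ‖x‖ ^ (q + 1) ≤ M ^ (q + 1)).trans hMp
    have hsplit : localA' (r * e) * x ^ (q + 1) + 6 * ampl * y ^ (q + 1)
        = (localA' (r * e) + 6 * ampl) * x ^ (q + 1)
          - 6 * ampl * (x ^ (q + 1) - y ^ (q + 1)) := by ring
    rw [hsplit]
    have hnorm : ‖(6 * ampl : ℂ)‖ = 6 * ampl := by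
      rw [norm_mul, norm_real, Real.norm_of_nonneg ha.le]; norm_num
    calc _ ≤ ‖localA' (r * e) + 6 * ampl‖ * ‖x ^ (q + 1)‖
          + 6 * ampl * ‖x ^ (q + 1) - y ^ (q + 1)‖ := by
          refine (norm_sub_le _ _).trans ?_
          rw [norm_mul, norm_mul, hnorm]
      _ ≤ K * r * E + 6 * ampl * ((q + 1 : ℕ) * (8 * r ^ 4) * (2 * E)) := by
          gcongr
          exact hK r hr'
      _ ≤ _ := by
          have h1 : 0 ≤ ampl * (r * E) := by positivity
          have h2 : 0 ≤ ((q + 1 : ℕ) : ℝ) * (r ^ 4 * E) * ampl := by positivity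
          have h3 : 0 ≤ K * (((q + 1 : ℕ) : ℝ) * (r ^ 4 * E)) := by positivity
          nlinarith
  · rw [Set.indicator_of_notMem (fun h => hr4 h.2), zero_add, norm_mul, norm_mul, norm_real,
      norm_real, Real.norm_of_nonneg ha.le, Real.norm_of_nonneg (Real.exp_pos _).le]
    have h1 : Real.exp (-(2 / 3 * p) * r ^ 3) ≤ E := by
      rw [hE]
      gcongr
      have : (0 : ℝ) ≤ p := p.cast_nonneg
      linarith
    have h2 : E ≤ r * E := le_mul_of_one_le_left hE0.le (by linarith)
    have h3 : 0 ≤ (K + 100 * ampl) * ((p : ℝ) * (r ^ 4 * E)) := by positivity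
    have h4 : 0 ≤ K * (r * E) := by positivity
    have h5 : ampl * Real.exp (-(2 / 3 * p) * r ^ 3) ≤ ampl * (r * E) := by
      gcongr; exact h1.trans h2
    have h6 : 0 ≤ ampl * (r * E) := by positivity
    rw [show ‖(6 : ℂ)‖ = 6 by norm_num]
    nlinarith

lemma integral_pow_mul_exp_neg_mul_cube (n : ℕ) {b : ℝ} (hb : 0 < b) :
    ∫ r in Set.Ioi (0 : ℝ), r ^ n * Real.exp (-b * r ^ 3)
      = b ^ (-((n : ℝ) + 1) / 3) * (1 / 3) * Real.Gamma (((n : ℝ) + 1) / 3) := by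
  have := _root_.integral_rpow_mul_exp_neg_mul_rpow (p := 3) (q := n) (b := b) (by norm_num)
    (by linarith [n.cast_nonneg (α := ℝ)]) hb
  simpa only [Real.rpow_natCast, Real.rpow_ofNat] using this

lemma integrableOn_pow_mul_exp_neg_mul_cube (n : ℕ) {b : ℝ} (hb : 0 < b) :
    MeasureTheory.IntegrableOn (fun r : ℝ => r ^ n * Real.exp (-b * r ^ 3)) (Set.Ioi 0) := by
  have := integrableOn_rpow_mul_exp_neg_mul_rpow (p := 3) (s := n) (b := b)
    (by linarith [n.cast_nonneg (α := ℝ)]) (by norm_num) hb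
  simpa only [Real.rpow_natCast, Real.rpow_ofNat] using this

lemma ray_integral_isBigO (he : e.re = 1 / 2) (hn : e.im ^ 2 = 3 / 4) :
    (fun p : ℕ => (∫ r in (0 : ℝ)..4, localA' (r * e) / localU (r * e) ^ p * e)
      + 6 * ampl * e * (((2 / 3 * p : ℝ) ^ (-1 / 3 : ℝ) * (1 / 3) * Real.Gamma (1 / 3) : ℝ) : ℂ))
      =O[atTop] (fun p : ℕ => (p : ℝ) ^ (-(2 : ℝ) / 3)) := by
  obtain ⟨C, hC0, hC⟩ := exists_ray_integrand_bound he hn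
  set D : ℝ := C * (‖e‖ * ((1 / 100 : ℝ) ^ (-((1 : ℕ) + 1 : ℝ) / 3) * (1 / 3)
      * Real.Gamma (((1 : ℕ) + 1 : ℝ) / 3)
    + (1 / 100 : ℝ) ^ (-((4 : ℕ) + 1 : ℝ) / 3) * (1 / 3) * Real.Gamma (((4 : ℕ) + 1 : ℝ) / 3)))
    with hD
  refine IsBigO.of_bound D ?_
  filter_upwards [eventually_ge_atTop 1] with p hp
  have hp0 : (0 : ℝ) < p := by exact_mod_cast hp
  set f : ℝ → ℂ := fun r => localA' (r * e) / localU (r * e) ^ p with hf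
  have hcont : ContinuousOn f (Set.Icc 0 4) := by
    refine ContinuousOn.div (continuousOn_localA'.comp (by fun_prop) fun r hr =>
      (ray_mem_disk he hn hr).1) ?_ fun r hr => ?_
    · exact ((continuous_localU.comp (by fun_prop)).pow p).continuousOn
    · have := ray_mem_disk he hn hr
      exact pow_ne_zero _ (localU_ne_zero this.1 this.2)
  have hfint : MeasureTheory.IntegrableOn f (Set.Ioc 0 4) :=
    (hcont.integrableOn_Icc).mono_set Set.Ioc_subset_Icc_self
  have hind : MeasureTheory.IntegrableOn ((Set.Ioc (0 : ℝ) 4).indicator f) (Set.Ioi 0) :=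
    ((MeasureTheory.integrable_indicator_iff measurableSet_Ioc).mpr hfint).integrableOn
  have hexp := integrableOn_pow_mul_exp_neg_mul_cube 0 (b := 2 / 3 * p) (by positivity)
  simp only [pow_zero, one_mul] at hexp
  have hexp' : MeasureTheory.IntegrableOn
      (fun r : ℝ => 6 * ampl * ((Real.exp (-(2 / 3 * p) * r ^ 3) : ℝ) : ℂ)) (Set.Ioi 0) :=
    (hexp.ofReal (𝕜 := ℂ)).const_mul _
  have hval := integral_pow_mul_exp_neg_mul_cube 0 (b := 2 / 3 * p) (by positivity)
  simp only [pow_zero, one_mul, Nat.cast_zero, zero_add] at hval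
  have hfull : (∫ r in (0 : ℝ)..4, f r * e)
      + 6 * ampl * e * (((2 / 3 * p : ℝ) ^ (-1 / 3 : ℝ) * (1 / 3) * Real.Gamma (1 / 3) : ℝ) : ℂ)
      = (∫ r in Set.Ioi (0 : ℝ), ((Set.Ioc (0 : ℝ) 4).indicator f r
        + 6 * ampl * (Real.exp (-(2 / 3 * p) * r ^ 3) : ℝ))) * e := by
    rw [MeasureTheory.integral_add hind hexp', MeasureTheory.integral_const_mul,
      integral_complex_ofReal, hval, MeasureTheory.setIntegral_indicator measurableSet_Ioc,
      Set.inter_eq_right.mpr Set.Ioc_subset_Ioi_self, intervalIntegral.integral_mul_const,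
      intervalIntegral.integral_of_le (by norm_num)]
    ring
  have hb : 0 < (p : ℝ) / 100 := by positivity
  have hi1 := integrableOn_pow_mul_exp_neg_mul_cube 1 hb
  have hi4 := integrableOn_pow_mul_exp_neg_mul_cube 4 hb
  have hv1 := integral_pow_mul_exp_neg_mul_cube 1 hb
  have hv4 := integral_pow_mul_exp_neg_mul_cube 4 hb
  simp only [pow_one] at hi1 hv1
  have hbound := MeasureTheory.norm_integral_le_of_norm_le
    (((hi1.add (hi4.const_mul (p : ℝ))).const_mul C))
    ((MeasureTheory.ae_restrict_mem measurableSet_Ioi).mono fun r hr => hC p hp r hr)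
  have hpow (s : ℝ) : ((p : ℝ) / 100) ^ s = (p : ℝ) ^ s * (1 / 100 : ℝ) ^ s := by
    rw [div_eq_mul_one_div, Real.mul_rpow hp0.le (by norm_num)]
  have hp1 : (p : ℝ) ^ (-((1 : ℕ) + 1 : ℝ) / 3) = (p : ℝ) ^ (-(2 : ℝ) / 3) := by norm_num
  have hp4 : (p : ℝ) * (p : ℝ) ^ (-((4 : ℕ) + 1 : ℝ) / 3) = (p : ℝ) ^ (-(2 : ℝ) / 3) := by
    rw [← Real.rpow_one_add' hp0.le (by norm_num)]
    norm_num
  rw [hfull, norm_mul, Real.norm_of_nonneg (by positivity)]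
  refine (mul_le_mul_of_nonneg_right hbound (norm_nonneg e)).trans_eq ?_
  have hsum : (∫ r in Set.Ioi (0 : ℝ), C * (((fun r => r * Real.exp (-(p / 100) * r ^ 3)) +
      fun r => (p : ℝ) * (r ^ 4 * Real.exp (-(p / 100) * r ^ 3))) r))
      = C * (((p : ℝ) / 100) ^ (-((1 : ℕ) + 1 : ℝ) / 3) * (1 / 3)
          * Real.Gamma (((1 : ℕ) + 1 : ℝ) / 3)
        + p * (((p : ℝ) / 100) ^ (-((4 : ℕ) + 1 : ℝ) / 3) * (1 / 3)
          * Real.Gamma (((4 : ℕ) + 1 : ℝ) / 3))) := by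
    rw [MeasureTheory.integral_const_mul]
    simp only [Pi.add_apply]
    rw [MeasureTheory.integral_add hi1 (hi4.const_mul _), MeasureTheory.integral_const_mul,
      hv1, hv4]
  refine (congrArg (· * ‖e‖) hsum).trans ?_
  rw [hpow, hpow, hp1, hD]
  linear_combination (C * ‖e‖ * ((1 / 100 : ℝ) ^ (-((4 : ℕ) + 1 : ℝ) / 3) * (1 / 3)
    * Real.Gamma (((4 : ℕ) + 1 : ℝ) / 3))) * hp4

end RayIntegral

lemma norm_localU_vertical_ge (t : ℝ) : 2 ≤ ‖localU (2 + t * I)‖ := by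
  have h1 : 2 ≤ ‖(2 + t * I : ℂ)‖ := by
    refine le_trans ?_ (re_le_norm _); simp
  have h2 : 4 ≤ ‖(2 + (2 + t * I) : ℂ)‖ := by
    refine le_trans ?_ (re_le_norm _); norm_num
  have h3 : 32 / 3 ≤ ‖(2 + t * I : ℂ) ^ 3 * (2 + (2 + t * I)) / 3‖ := by
    rw [norm_div, norm_mul, norm_pow, show ‖(3 : ℂ)‖ = 3 by norm_num]
    have : (2 : ℝ) ^ 3 * 4 ≤ ‖(2 + t * I : ℂ)‖ ^ 3 * ‖(2 + (2 + t * I) : ℂ)‖ := by gcongr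
    linarith
  have h4 := norm_sub_norm_le ((2 + t * I : ℂ) ^ 3 * (2 + (2 + t * I)) / 3) 1
  rw [localU, norm_sub_rev]
  rw [norm_one] at h4
  linarith

lemma vertical_integral_isBigO :
    (fun p : ℕ => ∫ t in -(2 * √3)..(2 * √3),
      localA' (2 + t * I) / localU (2 + t * I) ^ p * I)
      =O[atTop] (fun p : ℕ => (p : ℝ) ^ (-(2 : ℝ) / 3)) := by
  have hle : -(2 * √3) ≤ 2 * √3 := by linarith [Real.sqrt_nonneg 3]
  have hcont : ContinuousOn (fun t : ℝ => localA' (2 + t * I)) (Set.Icc (-(2 * √3)) (2 * √3)) :=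
    continuousOn_localA'.comp (by fun_prop) fun t ht => (vertical_mem_disk ht).1
  obtain ⟨K, hK⟩ := isCompact_Icc.exists_bound_of_continuousOn hcont
  have hgeom : (fun p : ℕ => ∫ t in -(2 * √3)..(2 * √3),
      localA' (2 + t * I) / localU (2 + t * I) ^ p * I) =O[atTop]
      (fun p : ℕ => (1 / 2 : ℝ) ^ p) := by
    refine IsBigO.of_bound (K * |2 * √3 - -(2 * √3)|) (.of_forall fun p => ?_)
    have hb := intervalIntegral.norm_integral_le_of_norm_le_const (a := -(2 * √3)) (b := 2 * √3)
      (f := fun t : ℝ => localA' (2 + t * I) / localU (2 + t * I) ^ p * I)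
      (C := K * (1 / 2) ^ p) fun t ht => by
        rw [Set.uIoc_of_le hle] at ht
        have h1 := hK t (Set.Ioc_subset_Icc_self ht)
        rw [norm_mul, norm_I, mul_one, norm_div, norm_pow, div_eq_mul_inv, ← inv_pow]
        have h2 : ‖localU (2 + t * I)‖⁻¹ ≤ 1 / 2 := by
          rw [one_div]
          exact inv_anti₀ (by norm_num) (norm_localU_vertical_ge t)
        have : 0 ≤ K := (norm_nonneg _).trans h1
        gcongr
    rw [Real.norm_of_nonneg (by positivity)]
    linarith
  refine hgeom.trans ?_
  have hlim := tendsto_pow_const_mul_const_pow_of_abs_lt_one 1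
    (show |(1 / 2 : ℝ)| < 1 by rw [abs_of_pos] <;> norm_num)
  have hbig : (fun p : ℕ => (p : ℝ) ^ 1 * (1 / 2 : ℝ) ^ p) =O[atTop] (fun _ => (1 : ℝ)) :=
    hlim.isBigO_one ℝ
  obtain ⟨C, hC⟩ := hbig.bound
  refine IsBigO.of_bound C ?_
  filter_upwards [hC, eventually_ge_atTop 1] with p hp hp1
  have hp1' : (1 : ℝ) ≤ p := by exact_mod_cast hp1
  have hp0 : (0 : ℝ) < p := by linarith
  rw [Real.norm_of_nonneg (by positivity)] at hp ⊢
  rw [Real.norm_of_nonneg (by positivity)]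
  rw [norm_one, mul_one, pow_one] at hp
  have hC0 : 0 ≤ C := le_trans (by positivity) hp
  calc (1 / 2 : ℝ) ^ p = p * (1 / 2 : ℝ) ^ p * (p : ℝ) ^ (-1 : ℝ) := by
        rw [Real.rpow_neg_one]; field_simp
    _ ≤ C * (p : ℝ) ^ (-(2 : ℝ) / 3) := by
        gcongr
        norm_num

lemma leading_constant (x : ℝ) (hx : 0 < x) :
    x * (bconst / Real.Gamma (-1 / 3) * x ^ (-(4 : ℝ) / 3))
      = 3 * √3 * ampl / Real.pi * ((2 / 3 * x) ^ (-1 / 3 : ℝ) * (1 / 3) * Real.Gamma (1 / 3)) := by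
  have h3 : √3 ^ 2 = 3 := Real.sq_sqrt (by norm_num)
  have hG : Real.Gamma (1 / 3) * Real.Gamma (2 / 3) = 2 * Real.pi / √3 := by
    have := Real.Gamma_mul_Gamma_one_sub (1 / 3)
    rw [show Real.pi * (1 / 3) = Real.pi / 3 by ring, Real.sin_pi_div_three] at this
    rw [show (2 / 3 : ℝ) = 1 - 1 / 3 by norm_num, this]
    field_simp
  have hneg : Real.Gamma (2 / 3) = -1 / 3 * Real.Gamma (-1 / 3) := by
    rw [← Real.Gamma_add_one (by norm_num)]; norm_num
  have hG2 : 0 < Real.Gamma (2 / 3) := Real.Gamma_pos_of_pos (by norm_num)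
  have hneg' : Real.Gamma (-1 / 3) = -3 * Real.Gamma (2 / 3) := by rw [hneg]; ring
  have hG1 : Real.Gamma (1 / 3) = 2 * Real.pi / √3 / Real.Gamma (2 / 3) := by
    rw [← hG]; field_simp
  have hxx : x * x ^ (-(4 : ℝ) / 3) = x ^ (-1 / 3 : ℝ) := by
    rw [← Real.rpow_one_add' hx.le (by norm_num)]; norm_num
  have h23 : (2 / 3 * x : ℝ) ^ (-1 / 3 : ℝ) = (3 / 2 : ℝ) ^ (1 / 3 : ℝ) * x ^ (-1 / 3 : ℝ) := by
    rw [Real.mul_rpow (by norm_num) hx.le, show (2 / 3 : ℝ) = (3 / 2)⁻¹ by norm_num,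
      Real.inv_rpow (by norm_num), ← Real.rpow_neg (by norm_num)]
    norm_num
  have hamp : ampl * (3 / 2 : ℝ) ^ (1 / 3 : ℝ) = 9 / 40 * (3 / 2 : ℝ) ^ (2 / 3 : ℝ) := by
    rw [ampl, mul_assoc, ← Real.rpow_add (by norm_num),
      show (7 / 3 + 1 / 3 : ℝ) = 2 + 2 / 3 by norm_num, Real.rpow_add (by norm_num)]
    norm_num
    ring
  calc _ = bconst / Real.Gamma (-1 / 3) * (x * x ^ (-(4 : ℝ) / 3)) := by ring
    _ = 2 * (9 / 40 * (3 / 2 : ℝ) ^ (2 / 3 : ℝ)) * x ^ (-1 / 3 : ℝ) / Real.Gamma (2 / 3) := by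
      rw [hxx, hneg', bconst]; field_simp; norm_num
    _ = _ := by
      rw [← hamp, h23, hG1]
      field_simp

/-- The coefficients `a p` are the Taylor coefficients at `0` of the analytic function
`A = Â ∘ û⁻¹`; this is encoded by the hypothesis that near `H = 0` the power series
`Σ a_p u^p` evaluated at `u = û(H)` sums to `Â(H)`. -/
theorem statement0 (ρ : ℝ) (hρ : 0 < ρ) (a : ℕ → ℂ)
    (hA : ∀ H : ℂ, ‖H‖ < ρ → HasSum (fun p : ℕ => a p * uhat H ^ p) (Ahat H)) :
    Asymptotics.IsBigO Filter.atTop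
      (fun p : ℕ => a p * (uc : ℂ) ^ p
        - (((bconst / Real.Gamma (-1/3)) * (p : ℝ) ^ (-(4:ℝ)/3) : ℝ) : ℂ))
      (fun p : ℕ => (p : ℝ) ^ (-(5:ℝ)/3)) := by
  set α : ℕ → ℂ := fun k => a k * (uc : ℂ) ^ k with hα
  have hαsum (h : ℂ) (hh : ‖1 - h‖ < ρ) :
      HasSum (fun k => α k * localU h ^ k) (localA h) := by
    have := hA (1 - h) hh
    rw [Ahat_one_sub, uhat_one_sub] at this
    simpa only [hα, mul_pow, mul_assoc] using this
  have h3 : √3 ^ 2 = 3 := Real.sq_sqrt (by norm_num)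
  set J : ℕ → ℝ := fun p => (2 / 3 * p : ℝ) ^ (-1 / 3 : ℝ) * (1 / 3) * Real.Gamma (1 / 3) with hJ
  have hup := ray_integral_isBigO (e := ζ) rfl (by simp [ζ, div_pow, h3]; norm_num)
  have hlow := ray_integral_isBigO (e := (starRingEnd ℂ) ζ) (by simp [ζ])
    (by simp [ζ, div_pow, h3]; norm_num)
  have hmain : (fun p : ℕ => 2 * Real.pi * I * (p * α p)
      - 6 * ampl * (ζ - (starRingEnd ℂ) ζ) * (J p : ℂ))
      =O[atTop] (fun p : ℕ => (p : ℝ) ^ (-(2 : ℝ) / 3)) := by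
    refine ((vertical_integral_isBigO.sub hup).add hlow).congr_left fun p => ?_
    have hf : ContinuousOn (fun h => localA' h / localU h ^ p) (disk \ {1}) :=
      (continuousOn_localA'.mono Set.sdiff_subset).div (continuous_localU.pow p).continuousOn
        fun h hh => pow_ne_zero _ (localU_ne_zero hh.1 hh.2)
    rw [← triangle_integral hf (isExactOn_sub_residue hρ hαsum p)]
    ring
  have hζ : ζ - (starRingEnd ℂ) ζ = √3 * I := by
    apply Complex.ext <;> simp [ζ]
  have hdiv : (fun p : ℕ => (((2 * Real.pi * p : ℝ) : ℂ) * I)⁻¹ * (2 * Real.pi * I * (p * α p)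
      - 6 * ampl * (ζ - (starRingEnd ℂ) ζ) * (J p : ℂ)))
      =O[atTop] (fun p : ℕ => (p : ℝ) ^ (-1 : ℝ) * (p : ℝ) ^ (-(2 : ℝ) / 3)) := by
    refine IsBigO.mul (IsBigO.of_bound 1 (.of_forall fun p => ?_)) hmain
    rw [norm_inv, norm_mul, norm_I, mul_one, norm_real, Real.rpow_neg_one, norm_inv, one_mul,
      norm_mul, mul_inv]
    refine mul_le_of_le_one_left (by positivity) (inv_le_one_of_one_le₀ ?_)
    rw [Real.norm_of_nonneg (by positivity)]
    linarith [Real.pi_gt_three]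
  refine (hdiv.congr' ?_ ?_)
  · filter_upwards [eventually_ge_atTop 1] with p hp
    have hp0 : (0 : ℝ) < p := by exact_mod_cast hp
    have hlead := leading_constant p hp0
    have hval : bconst / Real.Gamma (-1 / 3) * (p : ℝ) ^ (-(4 : ℝ) / 3)
        = 3 * √3 * ampl / Real.pi * J p / p := by
      rw [hJ, ← hlead]; field_simp
    rw [hval, hζ]
    have hpi : (Real.pi : ℂ) ≠ 0 := by exact_mod_cast Real.pi_ne_zero
    have hpc : (p : ℂ) ≠ 0 := by exact_mod_cast hp0.ne'
    push_cast
    field_simp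
    ring
  · filter_upwards [eventually_ge_atTop 1] with p hp
    have hp0 : (0 : ℝ) < p := by exact_mod_cast hp
    rw [← Real.rpow_add hp0]
    norm_num
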